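/- arXiv:2510.24312 — 2 statements merged into one kernel-verified Lean document; each statement's English description precedes it below -/
import Mathlib

section
/- Let n and k be positive integers. The equation (n‼)^k + n^k = (k‼)^n + k^n holds if and only if k = n. -/
/-!
If `k < n`, then the left-hand side is strictly larger, so equality forces `k = n` by symmetry.

The reason is that `n‼ ^ (1 / n)` increases from `n = 3` on, with room to spare:
`3 * n‼ ^ (n + 1) ≤ 2 * (n + 1)‼ ^ n`. This is an induction in steps of two, in which the growth
of `n‼` is controlled by a Wallis-type inequality and that of the new factors by Bernoulli's
inequality. Monotonicity carries the constant `3 / 2` over to `k‼ ^ n` and `n‼ ^ k`. For `k ≥ 4`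
we have `2 * k ≤ k‼`, so that `k ^ n` is at most half of `k‼ ^ n` and is absorbed by this constant.
For `k ≤ 3` the constant improves to `2` once `n ≥ 4`, which is enough as `k‼ = k` for `0 < k ≤ 3`.
-/

open Nat

lemma two_mul_pow_self_le_succ_pow {n : ℕ} (hn : n ≠ 0) : 2 * n ^ n ≤ (n + 1) ^ n :=
  calc 2 * n ^ n = n ^ n + n * n ^ (n - 1) * 1 := by rw [mul_one, mul_pow_sub_one hn, two_mul]
    _ ≤ (n + 1) ^ n := pow_add_mul_le_add_pow (Nat.zero_le n) (Nat.zero_le _) n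

section Propagation

variable {R : Type*} [CommSemiring R] [LinearOrder R] [IsStrictOrderedRing R]
  {f : ℕ → R} {a b x : R} {k m n : ℕ}

/-- The hypothesis `hf` says that `f i ^ (1 / i)` increases with `i`, while `(a / b) ^ (1 / i)`
decreases because `1 ≤ a / b`. -/
lemma mul_pow_le_mul_pow_of_pow_succ_le (hf₀ : ∀ i, 0 ≤ f i) (hx : 0 ≤ x) (hb : 0 < b)
    (hba : b ≤ a) (hm : m ≠ 0) (hf : ∀ i, m ≤ i → f i ^ (i + 1) ≤ f (i + 1) ^ i) (hmn : m ≤ n)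
    (h : a * x ^ m ≤ b * f m ^ k) : a * x ^ n ≤ b * f n ^ k := by
  induction n, hmn using Nat.le_induction with
  | base => exact h
  | succ n hmn ih =>
    have ha : 0 < a := hb.trans_le hba
    have hfn := hf₀ n
    have hfn' := hf₀ (n + 1)
    have hpow : a * (a * x ^ (n + 1)) ^ n ≤ a * (b * f (n + 1) ^ k) ^ n :=
      calc a * (a * x ^ (n + 1)) ^ n = (a * x ^ n) ^ (n + 1) := by ring
        _ ≤ (b * f n ^ k) ^ (n + 1) := by gcongr
        _ = b * (b ^ n * (f n ^ (n + 1)) ^ k) := by ring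
        _ ≤ a * (b ^ n * (f (n + 1) ^ n) ^ k) := by
          gcongr
          exact hf n hmn
        _ = a * (b * f (n + 1) ^ k) ^ n := by ring
    exact le_of_pow_le_pow_left₀ (by lia) (by positivity) (le_of_mul_le_mul_left hpow ha)

end Propagation

section DoubleFactorial

variable {a b k n : ℕ}

lemma add_two_mul_doubleFactorial_sq_le (n : ℕ) : (n + 2) * n‼ ^ 2 ≤ 2 * (n + 1)‼ ^ 2 := by
  induction n using Nat.twoStepInduction with
  | zero => decide
  | one => decide
  | more n ih _ =>
    calc (n + 2 + 2) * (n + 2)‼ ^ 2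
        = (n + 4) * (n + 2) * ((n + 2) * n‼ ^ 2) := by rw [doubleFactorial_add_two]; ring
      _ ≤ (n + 3) ^ 2 * (2 * (n + 1)‼ ^ 2) := by
        gcongr
        lia
      _ = 2 * (n + 3)‼ ^ 2 := by rw [doubleFactorial_add_two (n + 1)]; ring

lemma mul_doubleFactorial_pow_succ_le_add_two (h : a * n‼ ^ (n + 1) ≤ b * (n + 1)‼ ^ n) :
    a * (n + 2)‼ ^ (n + 3) ≤ b * (n + 3)‼ ^ (n + 2) :=
  calc a * (n + 2)‼ ^ (n + 3)
      = (n + 2) ^ (n + 2) * (a * n‼ ^ (n + 1)) * ((n + 2) * n‼ ^ 2) := by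
        rw [doubleFactorial_add_two, mul_pow]; ring
    _ ≤ (n + 2) ^ (n + 2) * (b * (n + 1)‼ ^ n) * (2 * (n + 1)‼ ^ 2) :=
        Nat.mul_le_mul (Nat.mul_le_mul_left _ h) (add_two_mul_doubleFactorial_sq_le n)
    _ = 2 * (n + 2) ^ (n + 2) * (b * (n + 1)‼ ^ (n + 2)) := by ring
    _ ≤ (n + 3) ^ (n + 2) * (b * (n + 1)‼ ^ (n + 2)) :=
        Nat.mul_le_mul_right _ (two_mul_pow_self_le_succ_pow (by lia))
    _ = b * (n + 3)‼ ^ (n + 2) := by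
        rw [doubleFactorial_add_two (n + 1), mul_pow]; ring

/-- The ratio `3 / 2` cannot be raised to `2`, which fails at `n = 4`. -/
lemma three_mul_doubleFactorial_pow_succ_le :
    ∀ {n : ℕ}, 3 ≤ n → 3 * n‼ ^ (n + 1) ≤ 2 * (n + 1)‼ ^ n
  | 3, _ => by decide
  | 4, _ => by decide
  | n + 5, _ => mul_doubleFactorial_pow_succ_le_add_two
      (three_mul_doubleFactorial_pow_succ_le (n := n + 3) (by lia))

lemma doubleFactorial_pow_succ_le (hn : 3 ≤ n) : n‼ ^ (n + 1) ≤ (n + 1)‼ ^ n := by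
  have := three_mul_doubleFactorial_pow_succ_le hn
  lia

lemma three_mul_doubleFactorial_pow_le (hk : 3 ≤ k) (hkn : k < n) : 3 * k‼ ^ n ≤ 2 * n‼ ^ k :=
  mul_pow_le_mul_pow_of_pow_succ_le (fun _ ↦ Nat.zero_le _) (Nat.zero_le _) (by decide) (by decide)
    k.succ_ne_zero (fun _ hi ↦ doubleFactorial_pow_succ_le (by lia)) hkn
    (three_mul_doubleFactorial_pow_succ_le hk)

lemma two_mul_pow_le_doubleFactorial_pow (hk : k ≤ 3) (hn : 4 ≤ n) : 2 * k ^ n ≤ n‼ ^ k := by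
  have base : 2 * k ^ 4 ≤ 1 * 4‼ ^ k := by interval_cases k <;> decide
  rw [← one_mul (n‼ ^ k)]
  exact mul_pow_le_mul_pow_of_pow_succ_le (fun _ ↦ Nat.zero_le _) (Nat.zero_le k) (by decide)
    (by decide) (by decide) (fun _ hi ↦ doubleFactorial_pow_succ_le (by lia)) hn base

lemma le_doubleFactorial_self : ∀ n : ℕ, n ≤ n‼
  | 0 => Nat.zero_le _
  | 1 => le_rfl
  | n + 2 => Nat.le_mul_of_pos_right _ (doubleFactorial_pos n)

lemma two_mul_le_doubleFactorial (hn : 4 ≤ n) : 2 * n ≤ n‼ := by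
  obtain ⟨m, rfl⟩ := Nat.exists_eq_add_of_le' hn
  calc 2 * (m + 4) ≤ (m + 2)‼ * (m + 4) := by
        gcongr
        exact (Nat.le_add_left 2 m).trans (le_doubleFactorial_self (m + 2))
    _ = (m + 4)‼ := by rw [mul_comm, doubleFactorial_add_two (m + 2)]

lemma two_mul_pow_le_doubleFactorial_self_pow (hk : 4 ≤ k) (hn : n ≠ 0) : 2 * k ^ n ≤ k‼ ^ n :=
  calc 2 * k ^ n ≤ 2 ^ n * k ^ n := Nat.mul_le_mul_right _ (Nat.le_self_pow hn 2)
    _ = (2 * k) ^ n := (mul_pow 2 k n).symm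
    _ ≤ k‼ ^ n := Nat.pow_le_pow_left (two_mul_le_doubleFactorial hk) n

lemma doubleFactorial_pow_add_pow_lt (hkn : k < n) : k‼ ^ n + k ^ n < n‼ ^ k + n ^ k := by
  have hpos : 0 < n ^ k := pow_pos (Nat.zero_lt_of_lt hkn) k
  obtain hk | hk : k ≤ 3 ∨ 4 ≤ k := by lia
  · obtain hn | hn : n ≤ 3 ∨ 4 ≤ n := by lia
    · interval_cases n <;> interval_cases k <;> decide
    · obtain rfl | hk₀ := Nat.eq_zero_or_pos k
      · simp [zero_pow (Nat.ne_zero_of_lt hkn)]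
      · have hfix : k‼ = k := by interval_cases k <;> rfl
        have hle := two_mul_pow_le_doubleFactorial_pow hk hn
        rw [hfix]
        lia
  · have hle := three_mul_doubleFactorial_pow_le (by lia) hkn
    have habsorb := two_mul_pow_le_doubleFactorial_self_pow hk (Nat.ne_zero_of_lt hkn)
    lia

end DoubleFactorial

theorem doubleFactorial_add_eq_iff (n k : ℕ) (hn : 0 < n) (hk : 0 < k) :
    (n‼) ^ k + n ^ k = (k‼) ^ n + k ^ n ↔ k = n := by
  refine ⟨fun h ↦ ?_, fun h ↦ by rw [h]⟩
  obtain hlt | heq | hgt := lt_trichotomy k n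
  · exact absurd h (doubleFactorial_pow_add_pow_lt hlt).ne'
  · exact heq
  · exact absurd h (doubleFactorial_pow_add_pow_lt hgt).ne
end

section
/- For every integer n ≥ 2, one has (n‼)^(n−1) > ((n−1)‼)^n; equivalently, the sequence n ↦ (n‼)^(1/n) is strictly increasing for n ≥ 2. -/
open Nat

/-!
Write `k = n - 1`. The two sides are compared through powers of `(k + 2) / 2`: on the one hand
`k‼ ^ 2 ≤ ((k + 2) / 2) ^ k`, on the other `(k + 2) / 2 < ((k + 1)‼ / k‼) ^ 2`, so that
`k‼ < ((k + 1)‼ / k‼) ^ k`. Both bounds go by induction in steps of two; the first comes down to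
`(1 + 2 / m) ^ m ≥ 2 ^ 2` with `m = k + 2`, a form of Bernoulli's inequality, and the second to
`(k + 2) * (k + 4) < (k + 3) ^ 2`.
-/

lemma two_pow_mul_pow_self_le_add_pow_self {c m : ℕ} (hcm : c ≤ m) :
    2 ^ c * m ^ m ≤ (m + c) ^ m := by
  obtain rfl | hm := m.eq_zero_or_pos
  · simp [Nat.le_zero.mp hcm]
  have hm_pos : (0 : ℝ) < m := by exact_mod_cast hm
  have bernoulli : (2 : ℝ) ^ (c / m : ℝ) ≤ 1 + c / m := by
    have := rpow_one_add_le_one_add_mul_self (s := 1) (p := c / m) (by norm_num) (by positivity)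
      (div_le_one_of_le₀ (by exact_mod_cast hcm) hm_pos.le)
    rwa [one_add_one_eq_two, mul_one] at this
  suffices (2 : ℝ) ^ c * m ^ m ≤ (m + c) ^ m by exact_mod_cast this
  calc (2 : ℝ) ^ c * m ^ m = ((2 : ℝ) ^ (c / m : ℝ) * m) ^ m := by
        rw [mul_pow, ← Real.rpow_mul_natCast zero_le_two, div_mul_cancel₀ _ hm_pos.ne',
          Real.rpow_natCast]
    _ ≤ ((1 + c / m) * m) ^ m := by gcongr
    _ = (m + c) ^ m := by rw [add_mul, one_mul, div_mul_cancel₀ _ hm_pos.ne']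

lemma two_pow_mul_doubleFactorial_sq_le : ∀ k : ℕ, 2 ^ k * k‼ ^ 2 ≤ (k + 2) ^ k
  | 0 => by decide
  | 1 => by decide
  | k + 2 =>
    calc 2 ^ (k + 2) * (k + 2)‼ ^ 2
        = 2 ^ 2 * (k + 2) ^ 2 * (2 ^ k * k‼ ^ 2) := by
          rw [doubleFactorial_add_two]
          ring
      _ ≤ 2 ^ 2 * (k + 2) ^ 2 * (k + 2) ^ k := by
        gcongr
        exact two_pow_mul_doubleFactorial_sq_le k
      _ = 2 ^ 2 * (k + 2) ^ (k + 2) := by ring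
      _ ≤ (k + 2 + 2) ^ (k + 2) := two_pow_mul_pow_self_le_add_pow_self (by lia)

lemma add_two_mul_doubleFactorial_sq_lt :
    ∀ {k : ℕ}, k ≠ 0 → (k + 2) * k‼ ^ 2 < 2 * (k + 1)‼ ^ 2
  | 1, _ => by decide
  | 2, _ => by decide
  | k + 3, _ =>
    calc (k + 3 + 2) * (k + 3)‼ ^ 2
        = (k + 3) * (k + 5) * ((k + 1 + 2) * (k + 1)‼ ^ 2) := by
          rw [doubleFactorial_add_two (k + 1)]
          ring
      _ < (k + 4) ^ 2 * (2 * (k + 2)‼ ^ 2) :=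
        Nat.mul_lt_mul_of_lt_of_lt (by linarith)
          (add_two_mul_doubleFactorial_sq_lt k.succ_ne_zero)
      _ = 2 * (k + 4)‼ ^ 2 := by
        rw [doubleFactorial_add_two (k + 2)]
        ring

theorem doubleFactorial_pow_strict_mono (n : ℕ) (hn : 2 ≤ n) :
    ((n - 1)‼) ^ n < (n‼) ^ (n - 1) := by
  obtain ⟨k, rfl⟩ := Nat.exists_eq_add_of_le' (one_le_two.trans hn)
  have hk : k ≠ 0 := by lia
  rw [Nat.add_sub_cancel]
  suffices 2 ^ k * (k‼ ^ (k + 1)) ^ 2 < 2 ^ k * ((k + 1)‼ ^ k) ^ 2 from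
    lt_of_pow_lt_pow_left₀ 2 (Nat.zero_le _) (Nat.lt_of_mul_lt_mul_left this)
  calc 2 ^ k * (k‼ ^ (k + 1)) ^ 2
      = (2 ^ k * k‼ ^ 2) * (k‼ ^ 2) ^ k := by ring
    _ ≤ (k + 2) ^ k * (k‼ ^ 2) ^ k := by
      gcongr
      exact two_pow_mul_doubleFactorial_sq_le k
    _ = ((k + 2) * k‼ ^ 2) ^ k := (mul_pow _ _ _).symm
    _ < (2 * (k + 1)‼ ^ 2) ^ k :=
      Nat.pow_lt_pow_left (add_two_mul_doubleFactorial_sq_lt hk) hk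
    _ = 2 ^ k * ((k + 1)‼ ^ k) ^ 2 := by ring
end
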